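/- There exists C > 0 such that for every differentiable u : ℝ³ → ℂ with ∇u ∈ L²(ℝ³) and ‖u‖_{L²} = 1: the function f_u(k) = 2 k B₀(k) · ∫_{ℝ³} e^{−ik·x} \overline{u(x)} (−i∇u(x)) dx (the dot denoting the ℝ³ scalar product) satisfies sup_{k∈ℝ³} |f_u(k)| ≤ C ‖u‖_{H¹}² and ∫_{ℝ³} ω(k) |f_u(k)|² dk ≤ C ‖u‖_{H¹}⁴. -/

import Mathlib

open MeasureTheory
open scoped ENNReal

noncomputable section

/-- The dispersion relation `ω(k) = √(1+|k|²)` of the massive scalar field. -/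
def ω (k : EuclideanSpace ℝ (Fin 3)) : ℝ := Real.sqrt (1 + ‖k‖ ^ 2)

/-- The Gross dressing form factor `B₀(k) = 1/(√(ω(k))·(|k|²+ω(k)))`. -/
def B0 (k : EuclideanSpace ℝ (Fin 3)) : ℝ := 1 / (Real.sqrt (ω k) * (‖k‖ ^ 2 + ω k))

/-- The square of the `H¹`-norm, `‖u‖_{H¹}² = ‖u‖_{L²}² + ‖∇u‖_{L²}²`. -/
def H1sq (u : EuclideanSpace ℝ (Fin 3) → ℂ) : ℝ :=
  (∫ x, ‖u x‖ ^ 2) + ∫ x, ‖fderiv ℝ u x‖ ^ 2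

/-- The `H¹`-norm of `u`. -/
def H1norm (u : EuclideanSpace ℝ (Fin 3) → ℂ) : ℝ := Real.sqrt (H1sq u)

/-- The `j`-th partial derivative of `u`. -/
def pd (u : EuclideanSpace ℝ (Fin 3) → ℂ) (j : Fin 3) (x : EuclideanSpace ℝ (Fin 3)) : ℂ :=
  fderiv ℝ u x (EuclideanSpace.single j 1)

/-- The source term `f_u(k) = 2 k B₀(k) · ∫ e^{−ik·x} \bar u(x)(−i∇u(x)) dx` of the dressed
Schrödinger–Klein–Gordon field equation. -/
def fu (u : EuclideanSpace ℝ (Fin 3) → ℂ) (k : EuclideanSpace ℝ (Fin 3)) : ℂ :=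
  ((2 * B0 k : ℝ) : ℂ) * ∑ j : Fin 3, ((k j : ℝ) : ℂ) *
    ∫ x, Complex.exp (-(Complex.I * ((inner ℝ k x : ℝ) : ℂ))) *
      (starRingEnd ℂ) (u x) * (-Complex.I * pd u j x)

section helpers
open FourierTransform SchwartzMap LineDeriv

local notation "E3" => EuclideanSpace ℝ (Fin 3)
local notation "LL" => Lp (α := EuclideanSpace ℝ (Fin 3)) ℂ 2 volume

lemma aux_fourier_test (f : LL) (φ : 𝓢(E3, ℂ)) :
    ∫ x, φ x • (𝓕 f : LL) x = ∫ x, (𝓕 φ) x • f x := by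
  have h := congrArg (fun T : 𝓢'(E3, ℂ) => T φ) (Lp.fourier_toTemperedDistribution_eq f)
  simp only [TemperedDistribution.fourier_apply, Lp.toTemperedDistribution_apply] at h
  exact h.symm

lemma aux_ae_eq {f g : E3 → ℂ} (hf : LocallyIntegrable f volume)
    (hg : LocallyIntegrable g volume)
    (h : ∀ φ : 𝓢(E3, ℂ), ∫ x, φ x • f x = ∫ x, φ x • g x) : f =ᵐ[volume] g := by
  apply ae_eq_of_integral_contDiff_smul_eq hf hg
  intro g g_smooth g_cpt
  have hg₁ : HasCompactSupport (Complex.ofRealCLM ∘ g) := g_cpt.comp_left rfl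
  have hg₂ : ContDiff ℝ (⊤ : ℕ∞) (Complex.ofRealCLM ∘ g) := by fun_prop
  have := h (hg₁.toSchwartzMap hg₂)
  simpa using this

lemma aux_shift (f g : LL) (κ : E3)
    (hg : g =ᵐ[volume] fun x => Complex.exp (2 * Real.pi * Complex.I * ((inner ℝ κ x : ℝ) : ℂ)) * f x) :
    (𝓕 g : LL) =ᵐ[volume] fun ξ => (𝓕 f : LL) (ξ - κ) := by
  have hU := (Lp.memLp (𝓕 f : LL))
  have hmp : MeasurePreserving (fun ξ : E3 => ξ - κ) volume volume :=
    measurePreserving_sub_right volume κ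
  have hU' := hU.comp_measurePreserving hmp
  apply aux_ae_eq
  · exact (Lp.memLp _).locallyIntegrable (by norm_num)
  · exact hU'.locallyIntegrable (by norm_num)
  intro φ
  rw [aux_fourier_test]
  have h1 : ∫ ξ, φ ξ • (𝓕 f : LL) (ξ - κ)
      = ∫ ξ, (φ.compSubConstCLM ℂ (-κ)) ξ • (𝓕 f : LL) ξ := by
    rw [← integral_sub_right_eq_self (μ := volume)
      (fun ξ => (φ.compSubConstCLM ℂ (-κ)) ξ • (𝓕 f : LL) ξ) κ]
    simp
  rw [h1, aux_fourier_test]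
  apply integral_congr_ae
  filter_upwards [hg] with x hx
  rw [hx]
  have h2 : 𝓕 (φ.compSubConstCLM ℂ (-κ)) x
      = Complex.exp (2 * Real.pi * Complex.I * ((inner ℝ κ x : ℝ) : ℂ)) * 𝓕 φ x := by
    rw [fourier_coe, fourier_coe, Real.fourier_eq', Real.fourier_eq',
      ← integral_const_mul, ← integral_sub_right_eq_self (μ := volume) _ κ]
    congr 1
    ext v
    simp only [compSubConstCLM_apply, smul_eq_mul, sub_neg_eq_add, sub_add_cancel, ← mul_assoc]
    congr 1
    rw [← Complex.exp_add]
    congr 1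
    rw [inner_sub_left]
    push_cast
    ring
  rw [h2]
  simp only [smul_eq_mul]
  ring

lemma aux_deriv (u : E3 → ℂ) (hu : Differentiable ℝ u) (f g : LL) (m : E3)
    (hf : f =ᵐ[volume] u) (hg : g =ᵐ[volume] fun x => fderiv ℝ u x m) :
    (𝓕 g : LL) =ᵐ[volume] fun ξ =>
      (2 * Real.pi * Complex.I * ((inner ℝ ξ m : ℝ) : ℂ)) * (𝓕 f : LL) ξ := by
  have hD : ∂_{m} (f : 𝓢'(E3, ℂ)) = (g : 𝓢'(E3, ℂ)) := by
    ext φ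
    simp only [TemperedDistribution.lineDerivOp_apply_apply, map_neg,
      Lp.toTemperedDistribution_apply, smul_eq_mul, lineDerivOp_apply_eq_fderiv]
    have hfi : ∀ (w : LL) (ψ : 𝓢(E3, ℂ)), Integrable (fun x => w x * ψ x) := by
      intro w ψ
      exact (Lp.memLp w).integrable_mul (ψ.memLp 2)
    have hu1 : ∫ x, fderiv ℝ φ x m * f x = ∫ x, u x * fderiv ℝ φ x m := by
      apply integral_congr_ae
      filter_upwards [hf] with x hx
      rw [hx, mul_comm]
    have hu2 : ∫ x, φ x * g x = ∫ x, fderiv ℝ u x m * φ x := by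
      apply integral_congr_ae
      filter_upwards [hg] with x hx
      rw [hx, mul_comm]
    rw [hu1, hu2, integral_mul_fderiv_eq_neg_fderiv_mul_of_integrable, neg_neg]
    · refine (hfi g φ).congr ?_
      filter_upwards [hg] with x hx
      rw [hx]
    · refine (hfi f (∂_{m} φ)).congr ?_
      filter_upwards [hf] with x hx
      rw [hx, lineDerivOp_apply_eq_fderiv]
    · refine (hfi f φ).congr ?_
      filter_upwards [hf] with x hx
      rw [hx]
    · intro x _; exact hu x
    · intro x _; exact φ.differentiableAt
  have hF := congrArg (fun T : 𝓢'(E3, ℂ) => 𝓕 T) hD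
  simp only [TemperedDistribution.fourier_lineDerivOp_eq,
    Lp.fourier_toTemperedDistribution_eq] at hF
  apply aux_ae_eq
  · exact (Lp.memLp _).locallyIntegrable (by norm_num)
  · have h0 : LocallyIntegrable (𝓕 f : LL) volume :=
      (Lp.memLp _).locallyIntegrable (by norm_num)
    rw [← locallyIntegrableOn_univ] at h0 ⊢
    exact h0.continuousOn_mul (by fun_prop) (isOpen_univ.isLocallyClosed)
  intro φ
  have := congrArg (fun T : 𝓢'(E3, ℂ) => T φ) hF
  have htg : (fun ξ : E3 => ((inner ℝ ξ m : ℝ) : ℂ)).HasTemperateGrowth := by fun_prop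
  simp only [Lp.toTemperedDistribution_apply, smul_apply,
    TemperedDistribution.smulLeftCLM_apply_apply] at this
  rw [← this, ← integral_smul]
  congr 1
  ext ξ
  rw [SchwartzMap.smulLeftCLM_apply_apply htg]
  simp only [smul_eq_mul]
  ring


/-- The weight `1 + |ξ|²` as an extended nonnegative real. -/
def auxW (ξ : EuclideanSpace ℝ (Fin 3)) : ℝ≥0∞ := ENNReal.ofReal (1 + ‖ξ‖ ^ 2)

lemma auxW_meas : Measurable auxW := by
  unfold auxW; fun_prop

lemma auxW_ne_zero (ξ : E3) : auxW ξ ≠ 0 := by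
  unfold auxW
  have : 0 < 1 + ‖ξ‖ ^ 2 := by positivity
  simpa using this

lemma auxW_ne_top (ξ : E3) : auxW ξ ≠ ⊤ := ENNReal.ofReal_ne_top

lemma aux_CS {f g : E3 → ℝ≥0∞} (hf : Measurable f) (hg : Measurable g) :
    (∫⁻ x, f x * g x) ^ 2 ≤ (∫⁻ x, f x ^ 2) * ∫⁻ x, g x ^ 2 := by
  have h := ENNReal.lintegral_mul_le_Lp_mul_Lq volume Real.HolderConjugate.two_two
    hf.aemeasurable hg.aemeasurable
  simp only [Pi.mul_apply, ENNReal.rpow_two] at h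
  calc _ ≤ ((∫⁻ x, f x ^ 2) ^ (1 / 2 : ℝ) * (∫⁻ x, g x ^ 2) ^ (1 / 2 : ℝ)) ^ 2 := by gcongr
    _ = _ := by
      rw [mul_pow, ← ENNReal.rpow_two, ← ENNReal.rpow_two, ← ENNReal.rpow_mul, ← ENNReal.rpow_mul]
      norm_num

lemma aux_core (U D : E3 → ℂ) (hU : Measurable U) (hD : Measurable D) (κ : E3) :
    (∫⁻ ξ, ‖U (ξ - κ)‖ₑ * ‖D ξ‖ₑ) ^ 2 ≤
      (∫⁻ ξ, auxW ξ * ‖U ξ‖ₑ ^ 2) * ∫⁻ ξ, ‖D ξ‖ₑ ^ 2 * (auxW (ξ - κ))⁻¹ := by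
  have hW := auxW_meas
  have h1 : ∀ ξ, ‖U (ξ - κ)‖ₑ * ‖D ξ‖ₑ =
      (auxW (ξ - κ) ^ (1 / 2 : ℝ) * ‖U (ξ - κ)‖ₑ) *
        (‖D ξ‖ₑ * ((auxW (ξ - κ)) ^ (1 / 2 : ℝ))⁻¹) := by
    intro ξ
    have h0 : auxW (ξ - κ) ^ (1 / 2 : ℝ) ≠ 0 := by
      simp [auxW_ne_zero, auxW_ne_top]
    have ht : auxW (ξ - κ) ^ (1 / 2 : ℝ) ≠ ⊤ := by
      simp [auxW_ne_zero, auxW_ne_top]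
    calc _ = (auxW (ξ - κ) ^ (1 / 2 : ℝ) * (auxW (ξ - κ) ^ (1 / 2 : ℝ))⁻¹) *
          (‖U (ξ - κ)‖ₑ * ‖D ξ‖ₑ) := by rw [ENNReal.mul_inv_cancel h0 ht, one_mul]
      _ = _ := by ring
  have hsq : ∀ ξ, (auxW ξ ^ (1 / 2 : ℝ)) ^ 2 = auxW ξ := by
    intro ξ
    rw [← ENNReal.rpow_two, ← ENNReal.rpow_mul]; norm_num
  simp_rw [h1]
  refine (aux_CS (by fun_prop) (by fun_prop)).trans (le_of_eq ?_)
  congr 1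
  · rw [← lintegral_sub_right_eq_self (μ := volume) (fun ξ => auxW ξ * ‖U ξ‖ₑ ^ 2) κ]
    congr 1; ext ξ
    rw [mul_pow, hsq]
  · congr 1; ext ξ
    rw [mul_pow, ← ENNReal.inv_pow, hsq]

lemma aux_norm (f : LL) : ∫⁻ x, ‖f x‖ₑ ^ 2 = ‖f‖ₑ ^ 2 := by
  rw [Lp.enorm_def, eLpNorm_eq_lintegral_rpow_enorm_toReal (by norm_num) (by norm_num)]
  rw [← ENNReal.rpow_two, ← ENNReal.rpow_mul]
  norm_num

lemma aux_plancherel (f : LL) : ∫⁻ x, ‖(𝓕 f : LL) x‖ₑ ^ 2 = ∫⁻ x, ‖f x‖ₑ ^ 2 := by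
  rw [aux_norm, aux_norm, enorm_eq_iff_norm_eq.2 (Lp.norm_fourier_eq f)]

lemma aux_M : ∃ M : ℝ≥0∞, M ≠ ⊤ ∧ ∀ ξ : E3,
    ∫⁻ k, (auxW k)⁻¹ * (auxW (ξ - (2 * Real.pi)⁻¹ • k))⁻¹ ≤ M := by
  have hW := auxW_meas
  have hK : ∫⁻ k, ((auxW k)⁻¹) ^ 2 < ⊤ := by
    have h := (integrable_rpow_neg_one_add_norm_sq (E := E3) (μ := volume) (r := 4)
      (by simp; norm_num)).lintegral_lt_top
    refine lt_of_le_of_lt (le_of_eq ?_) h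
    congr 1; ext k
    have : 0 < 1 + ‖k‖ ^ 2 := by positivity
    rw [auxW, ← ENNReal.ofReal_inv_of_pos this, ← ENNReal.ofReal_pow (by positivity)]
    congr 1
    rw [show (-4 / 2 : ℝ) = -(2 : ℕ) by norm_num, Real.rpow_neg this.le, Real.rpow_natCast, inv_pow]
  set K := ∫⁻ k, ((auxW k)⁻¹) ^ 2 with hKdef
  refine ⟨ENNReal.ofReal ((2 * Real.pi) ^ 2) * (K + K),
    ENNReal.mul_ne_top ENNReal.ofReal_ne_top (by simp [hK.ne]), ?_⟩
  intro ξ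
  have hpi : 1 ≤ (2 * Real.pi) := by linarith [Real.pi_gt_three]
  have hpi0 : 0 < (2 * Real.pi) := by linarith [Real.pi_gt_three]
  have hb : ∀ k : E3, (auxW k)⁻¹ * (auxW (ξ - (2 * Real.pi)⁻¹ • k))⁻¹ ≤
      ENNReal.ofReal ((2 * Real.pi) ^ 2) *
        (((auxW k)⁻¹) ^ 2 + ((auxW (k - (2 * Real.pi) • ξ))⁻¹) ^ 2) := by
    intro k
    have e1 : ξ - (2 * Real.pi)⁻¹ • k = - ((2 * Real.pi)⁻¹ • (k - (2 * Real.pi) • ξ)) := by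
      rw [smul_sub, smul_smul, inv_mul_cancel₀ hpi0.ne', one_smul]; abel
    set a := ‖k‖
    set b := ‖k - (2 * Real.pi) • ξ‖ with hb
    have e2 : ‖ξ - (2 * Real.pi)⁻¹ • k‖ = (2 * Real.pi)⁻¹ * b := by
      rw [e1, norm_neg, norm_smul, Real.norm_of_nonneg (by positivity)]
    unfold auxW
    rw [e2, ← hb]
    have p1 : 0 < 1 + a ^ 2 := by positivity
    have p2 : 0 < 1 + b ^ 2 := by positivity
    have p3 : 0 < 1 + ((2 * Real.pi)⁻¹ * b) ^ 2 := by positivity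
    rw [← ENNReal.ofReal_inv_of_pos p1, ← ENNReal.ofReal_inv_of_pos p2,
      ← ENNReal.ofReal_inv_of_pos p3, ← ENNReal.ofReal_pow (by positivity),
      ← ENNReal.ofReal_pow (by positivity), ← ENNReal.ofReal_add (by positivity) (by positivity),
      ← ENNReal.ofReal_mul (by positivity), ← ENNReal.ofReal_mul (by positivity)]
    apply ENNReal.ofReal_le_ofReal
    have h3 : (1 + ((2 * Real.pi)⁻¹ * b) ^ 2)⁻¹ ≤ (2 * Real.pi) ^ 2 * (1 + b ^ 2)⁻¹ := by
      rw [← div_eq_mul_inv, inv_le_comm₀ p3 (by positivity), inv_div, div_le_iff₀ (by positivity)]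
      have : (1 + ((2 * Real.pi)⁻¹ * b) ^ 2) * (2 * Real.pi) ^ 2 = (2 * Real.pi) ^ 2 + b ^ 2 := by
        field_simp
      rw [this]; nlinarith
    have q1 : 0 < (1 + a ^ 2)⁻¹ := by positivity
    calc _ ≤ (1 + a ^ 2)⁻¹ * ((2 * Real.pi) ^ 2 * (1 + b ^ 2)⁻¹) := by gcongr
      _ = (2 * Real.pi) ^ 2 * ((1 + a ^ 2)⁻¹ * (1 + b ^ 2)⁻¹) := by ring
      _ ≤ _ := by
        gcongr
        nlinarith [sq_nonneg ((1 + a ^ 2)⁻¹ - (1 + b ^ 2)⁻¹), sq_nonneg ((1 + a ^ 2)⁻¹),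
          sq_nonneg ((1 + b ^ 2)⁻¹)]
  calc _ ≤ ∫⁻ k : E3, ENNReal.ofReal ((2 * Real.pi) ^ 2) *
        (((auxW k)⁻¹) ^ 2 + ((auxW (k - (2 * Real.pi) • ξ))⁻¹) ^ 2) := lintegral_mono hb
    _ = _ := by
      rw [lintegral_const_mul _ (by fun_prop), lintegral_add_left (by fun_prop),
        lintegral_sub_right_eq_self (μ := volume) (fun k => ((auxW k)⁻¹) ^ 2)]

/-- The integral in the `j`-th component of the source term. -/
def auxF (u : EuclideanSpace ℝ (Fin 3) → ℂ) (j : Fin 3) (k : EuclideanSpace ℝ (Fin 3)) : ℂ :=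
  ∫ x, Complex.exp (-(Complex.I * ((inner ℝ k x : ℝ) : ℂ))) *
      (starRingEnd ℂ) (u x) * (-Complex.I * pd u j x)

lemma aux_pd_norm (u : E3 → ℂ) (j : Fin 3) (x : E3) : ‖pd u j x‖ ≤ ‖fderiv ℝ u x‖ := by
  have := (fderiv ℝ u x).le_opNorm (EuclideanSpace.single j 1)
  simpa [pd] using this

lemma aux_pd_memLp (u : E3 → ℂ) (hg : MemLp (fun x => fderiv ℝ u x) 2 volume) (j : Fin 3) :
    MemLp (pd u j) 2 volume := by
  refine hg.mono ?_ (Filter.Eventually.of_forall (aux_pd_norm u j))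
  exact hg.1.apply_continuousLinearMap _

lemma aux_lint {F : Type*} [NormedAddCommGroup F] (g : E3 → F) (hg : MemLp g 2 volume) :
    ∫⁻ x, ‖g x‖ₑ ^ 2 = ENNReal.ofReal (∫ x, ‖g x‖ ^ 2) := by
  rw [ofReal_integral_eq_lintegral_ofReal]
  · congr 1; ext x
    rw [← ofReal_norm, ENNReal.ofReal_pow (norm_nonneg _)]
  · exact (memLp_two_iff_integrable_sq_norm hg.1).1 hg
  · exact Filter.Eventually.of_forall fun x => by positivity

lemma aux_F_bound (u : E3 → ℂ) (hu2 : MemLp u 2 volume) (j : Fin 3)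
    (hp : MemLp (pd u j) 2 volume) (k : E3) :
    ‖auxF u j k‖ₑ ^ 2 ≤ (∫⁻ ξ, auxW ξ * ‖(𝓕 (hu2.toLp u) : LL) ξ‖ₑ ^ 2) *
      ∫⁻ ξ, ‖(𝓕 (hp.toLp _) : LL) ξ‖ₑ ^ 2 * (auxW (ξ - (2 * Real.pi)⁻¹ • k))⁻¹ := by
  set κ := (2 * Real.pi)⁻¹ • k with hκ
  have hpi0 : 0 < (2 * Real.pi) := by linarith [Real.pi_gt_three]
  set e : E3 → ℂ := fun x => Complex.exp (2 * Real.pi * Complex.I * ((inner ℝ κ x : ℝ) : ℂ)) with he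
  have hen : ∀ x, ‖e x‖ = 1 := by
    intro x
    have : (2 * Real.pi * Complex.I * ((inner ℝ κ x : ℝ) : ℂ)) =
      ((2 * Real.pi * inner ℝ κ x : ℝ) : ℂ) * Complex.I := by push_cast; ring
    rw [he]
    simp only
    rw [this, Complex.norm_exp_ofReal_mul_I]
  have hec : Continuous e := by rw [he]; fun_prop
  have hv : MemLp (fun x => e x * u x) 2 volume := by
    refine hu2.mono (hec.aestronglyMeasurable.mul hu2.1) (Filter.Eventually.of_forall ?_)
    intro x; simp [hen]
  have hsh := aux_shift (hu2.toLp u) (hv.toLp _) κ (by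
    filter_upwards [hu2.coeFn_toLp, hv.coeFn_toLp] with x h1 h2
    rw [h1, h2])
  have hin : auxF u j k = -Complex.I * inner ℂ (hv.toLp _ : LL) (hp.toLp _ : LL) := by
    rw [L2.inner_def, ← integral_const_mul, auxF]
    apply integral_congr_ae
    filter_upwards [hp.coeFn_toLp, hv.coeFn_toLp] with x h1 h2
    rw [h1, h2, RCLike.inner_apply, map_mul]
    have : (starRingEnd ℂ) (e x) = Complex.exp (-(Complex.I * ((inner ℝ k x : ℝ) : ℂ))) := by
      rw [he]
      simp only
      rw [← Complex.exp_conj]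
      congr 1
      simp only [map_mul, Complex.conj_I, Complex.conj_ofReal, map_ofNat, hκ, inner_smul_left]
      push_cast
      have : (Real.pi : ℂ) ≠ 0 := by exact_mod_cast Real.pi_ne_zero
      simp
      field_simp
    rw [this]; ring
  rw [hin, ← Lp.inner_fourier_eq, L2.inner_def]
  have hle : ‖-Complex.I * ∫ a, inner ℂ ((𝓕 (hv.toLp _) : LL) a) ((𝓕 (hp.toLp _) : LL) a)‖ₑ ≤
      ∫⁻ ξ, ‖(𝓕 (hu2.toLp u) : LL) (ξ - κ)‖ₑ * ‖(𝓕 (hp.toLp _) : LL) ξ‖ₑ := by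
    rw [enorm_mul]
    have : ‖-Complex.I‖ₑ = 1 := by rw [← ofReal_norm]; simp
    rw [this, one_mul]
    refine (enorm_integral_le_lintegral_enorm _).trans (le_of_eq ?_)
    apply lintegral_congr_ae
    filter_upwards [hsh] with ξ h
    rw [h, RCLike.inner_apply, enorm_mul, mul_comm]
    simp
  refine (pow_le_pow_left' hle 2).trans ?_
  exact aux_core _ _ (Lp.stronglyMeasurable _).measurable (Lp.stronglyMeasurable _).measurable κ

lemma aux_A (u : E3 → ℂ) (hu : Differentiable ℝ u) (hu2 : MemLp u 2 volume)
    (hp : ∀ j, MemLp (pd u j) 2 volume) :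
    ∫⁻ ξ, auxW ξ * ‖(𝓕 (hu2.toLp u) : LL) ξ‖ₑ ^ 2 ≤
      (∫⁻ x, ‖u x‖ₑ ^ 2) + ∑ j : Fin 3, ∫⁻ x, ‖pd u j x‖ₑ ^ 2 := by
  have hL : ∀ (g : E3 → ℂ) (hg : MemLp g 2 volume),
      ∫⁻ x, ‖g x‖ₑ ^ 2 = ∫⁻ x, ‖(𝓕 (hg.toLp g) : LL) x‖ₑ ^ 2 := by
    intro g hg
    rw [aux_plancherel]
    apply lintegral_congr_ae
    filter_upwards [hg.coeFn_toLp] with x hx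
    rw [hx]
  rw [hL u hu2]
  simp_rw [fun j => hL _ (hp j)]
  have hm : ∀ f : LL, Measurable f := fun f => (Lp.stronglyMeasurable f).measurable
  have hm1 := hm (𝓕 (hu2.toLp u))
  have hm2 : ∀ j, Measurable (𝓕 ((hp j).toLp _) : LL) := fun j => hm _
  rw [← lintegral_finsetSum _ (by fun_prop), ← lintegral_add_left (by fun_prop)]
  have hd : ∀ j, _ := fun j => aux_deriv u hu (hu2.toLp u) ((hp j).toLp _)
    (EuclideanSpace.single j 1) hu2.coeFn_toLp (hp j).coeFn_toLp
  have hd' := ae_all_iff.2 hd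
  apply lintegral_mono_ae
  filter_upwards [hd'] with ξ hξ
  have hj : ∀ j, ENNReal.ofReal (ξ j ^ 2) * ‖(𝓕 (hu2.toLp u) : LL) ξ‖ₑ ^ 2 ≤
      ‖(𝓕 ((hp j).toLp _) : LL) ξ‖ₑ ^ 2 := by
    intro j
    rw [hξ j, enorm_mul, mul_pow]
    gcongr
    rw [← ofReal_norm, ← ENNReal.ofReal_pow (norm_nonneg _)]
    apply ENNReal.ofReal_le_ofReal
    have : ‖(2 * Real.pi * Complex.I * ((inner ℝ ξ (EuclideanSpace.single j 1) : ℝ) : ℂ))‖ =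
        2 * Real.pi * |ξ j| := by
      simp [EuclideanSpace.inner_single_right, abs_of_pos Real.pi_pos]
    rw [this, mul_pow, sq_abs]
    have : 1 ≤ (2 * Real.pi) := by linarith [Real.pi_gt_three]
    exact le_mul_of_one_le_left (sq_nonneg (ξ j)) (one_le_pow₀ this)
  have hW : auxW ξ = 1 + ∑ j : Fin 3, ENNReal.ofReal (ξ j ^ 2) := by
    rw [auxW, ENNReal.ofReal_add (by norm_num) (by positivity), ENNReal.ofReal_one,
      EuclideanSpace.real_norm_sq_eq, ENNReal.ofReal_sum_of_nonneg (fun i _ => sq_nonneg _)]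
  rw [hW, add_mul, one_mul, Finset.sum_mul]
  gcongr with j
  exact hj j

lemma aux_int (u : E3 → ℂ) (hu2 : MemLp u 2 volume) (j : Fin 3)
    (hp : MemLp (pd u j) 2 volume) (A M : ℝ≥0∞)
    (hA : ∫⁻ ξ, auxW ξ * ‖(𝓕 (hu2.toLp u) : LL) ξ‖ₑ ^ 2 ≤ A)
    (hM : ∀ ξ : E3, ∫⁻ k, (auxW k)⁻¹ * (auxW (ξ - (2 * Real.pi)⁻¹ • k))⁻¹ ≤ M) :
    ∫⁻ k, (auxW k)⁻¹ * ‖auxF u j k‖ₑ ^ 2 ≤ A * (M * ∫⁻ x, ‖pd u j x‖ₑ ^ 2) := by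
  have hW := auxW_meas
  have hm : Measurable (𝓕 (hp.toLp _) : LL) := (Lp.stronglyMeasurable _).measurable
  have hL : ∫⁻ x, ‖pd u j x‖ₑ ^ 2 = ∫⁻ x, ‖(𝓕 (hp.toLp _) : LL) x‖ₑ ^ 2 := by
    rw [aux_plancherel]
    apply lintegral_congr_ae
    filter_upwards [hp.coeFn_toLp] with x hx
    rw [hx]
  calc _ ≤ ∫⁻ k, A * ∫⁻ ξ, ‖(𝓕 (hp.toLp _) : LL) ξ‖ₑ ^ 2 *
          ((auxW k)⁻¹ * (auxW (ξ - (2 * Real.pi)⁻¹ • k))⁻¹) := by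
        apply lintegral_mono
        intro k
        have h := (aux_F_bound u hu2 j hp k).trans (mul_le_mul_left hA _)
        calc _ ≤ (auxW k)⁻¹ * (A * ∫⁻ ξ, ‖(𝓕 (hp.toLp _) : LL) ξ‖ₑ ^ 2 *
              (auxW (ξ - (2 * Real.pi)⁻¹ • k))⁻¹) := mul_le_mul_right h _
          _ = A * ((auxW k)⁻¹ * ∫⁻ ξ, ‖(𝓕 (hp.toLp _) : LL) ξ‖ₑ ^ 2 *
              (auxW (ξ - (2 * Real.pi)⁻¹ • k))⁻¹) := by ring
          _ = _ := by
            rw [← lintegral_const_mul _ (by fun_prop)]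
            congr 2; ext ξ; ring
    _ = A * ∫⁻ k, ∫⁻ ξ, ‖(𝓕 (hp.toLp _) : LL) ξ‖ₑ ^ 2 *
          ((auxW k)⁻¹ * (auxW (ξ - (2 * Real.pi)⁻¹ • k))⁻¹) := by
        rw [lintegral_const_mul]
        apply Measurable.lintegral_prod_right' (f := fun z : E3 × E3 =>
          ‖(𝓕 (hp.toLp _) : LL) z.2‖ₑ ^ 2 *
            ((auxW z.1)⁻¹ * (auxW (z.2 - (2 * Real.pi)⁻¹ • z.1))⁻¹))
        fun_prop
    _ = A * ∫⁻ ξ, ∫⁻ k, ‖(𝓕 (hp.toLp _) : LL) ξ‖ₑ ^ 2 *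
          ((auxW k)⁻¹ * (auxW (ξ - (2 * Real.pi)⁻¹ • k))⁻¹) := by
        rw [lintegral_lintegral_swap]
        apply Measurable.aemeasurable
        unfold Function.uncurry
        fun_prop
    _ ≤ A * ∫⁻ ξ, M * ‖(𝓕 (hp.toLp _) : LL) ξ‖ₑ ^ 2 := by
        gcongr with ξ
        rw [lintegral_const_mul _ (by fun_prop), mul_comm]
        gcongr
        exact hM ξ
    _ = _ := by
        rw [lintegral_const_mul _ (by fun_prop), hL]

lemma aux_pt (u : E3 → ℂ) (k : E3) :
    ENNReal.ofReal (ω k * ‖fu u k‖ ^ 2) ≤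
      4 * ∑ j : Fin 3, (auxW k)⁻¹ * ‖auxF u j k‖ₑ ^ 2 := by
  have hw0 : 1 ≤ ω k := by
    unfold ω; rw [Real.one_le_sqrt]; nlinarith [sq_nonneg ‖k‖]
  have hS : ‖∑ j : Fin 3, ((k j : ℝ) : ℂ) * auxF u j k‖ ^ 2 ≤
      ‖k‖ ^ 2 * ∑ j : Fin 3, ‖auxF u j k‖ ^ 2 := by
    calc _ ≤ (∑ j : Fin 3, |k j| * ‖auxF u j k‖) ^ 2 := by
          gcongr
          refine (norm_sum_le _ _).trans (le_of_eq ?_)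
          simp
      _ ≤ (∑ j : Fin 3, |k j| ^ 2) * ∑ j : Fin 3, ‖auxF u j k‖ ^ 2 :=
          Finset.sum_mul_sq_le_sq_mul_sq _ _ _
      _ = _ := by simp only [sq_abs, EuclideanSpace.real_norm_sq_eq]
  have p1 : 0 < 1 + ‖k‖ ^ 2 := by positivity
  have hfu : ‖fu u k‖ = 2 * B0 k * ‖∑ j : Fin 3, ((k j : ℝ) : ℂ) * auxF u j k‖ := by
    rw [fu, norm_mul, Complex.norm_real, Real.norm_of_nonneg]
    · rfl
    · unfold B0; positivity
  have hB : ω k * (B0 k) ^ 2 * ‖k‖ ^ 2 ≤ (1 + ‖k‖ ^ 2)⁻¹ := by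
    unfold B0
    have hw : 0 < ω k := by linarith
    rw [div_pow, mul_pow, Real.sq_sqrt hw.le, one_pow]
    have : ω k * (1 / (ω k * (‖k‖ ^ 2 + ω k) ^ 2)) * ‖k‖ ^ 2 = ‖k‖ ^ 2 / (‖k‖ ^ 2 + ω k) ^ 2 := by
      field_simp
    rw [this, div_le_iff₀ (by positivity), ← div_eq_inv_mul, le_div_iff₀ p1]
    nlinarith [sq_nonneg ‖k‖, mul_nonneg (sq_nonneg ‖k‖) (sub_nonneg.2 hw0)]
  have hfin : ω k * ‖fu u k‖ ^ 2 ≤ 4 * ∑ j : Fin 3, (1 + ‖k‖ ^ 2)⁻¹ * ‖auxF u j k‖ ^ 2 := by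
    rw [hfu, ← Finset.mul_sum]
    have hs : 0 ≤ ∑ j : Fin 3, ‖auxF u j k‖ ^ 2 := by positivity
    calc _ = 4 * (ω k * (B0 k) ^ 2) * ‖∑ j : Fin 3, ((k j : ℝ) : ℂ) * auxF u j k‖ ^ 2 := by ring
      _ ≤ 4 * (ω k * (B0 k) ^ 2) * (‖k‖ ^ 2 * ∑ j : Fin 3, ‖auxF u j k‖ ^ 2) := by gcongr
      _ = 4 * ((ω k * (B0 k) ^ 2 * ‖k‖ ^ 2) * ∑ j : Fin 3, ‖auxF u j k‖ ^ 2) := by ring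
      _ ≤ _ := by gcongr
  refine (ENNReal.ofReal_le_ofReal hfin).trans (le_of_eq ?_)
  rw [ENNReal.ofReal_mul (by norm_num), ENNReal.ofReal_sum_of_nonneg (fun i _ => by positivity)]
  congr 1
  · simp
  · congr 1; ext j
    rw [ENNReal.ofReal_mul (by positivity), ENNReal.ofReal_inv_of_pos p1,
      ENNReal.ofReal_pow (norm_nonneg _), ofReal_norm, auxW]

lemma aux_sup (u : E3 → ℂ) (hu2 : MemLp u 2 volume)
    (hg : MemLp (fun x => fderiv ℝ u x) 2 volume) (k : E3) : ‖fu u k‖ ≤ 3 * H1sq u := by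
  have hi1 := (memLp_two_iff_integrable_sq_norm hu2.1).1 hu2
  have hi2 := (memLp_two_iff_integrable_sq_norm hg.1).1 hg
  have hF : ∀ j, ‖auxF u j k‖ ≤ H1sq u / 2 := by
    intro j
    have : H1sq u / 2 = ∫ x, (‖u x‖ ^ 2 + ‖fderiv ℝ u x‖ ^ 2) / 2 := by
      rw [integral_div, integral_add hi1 hi2, H1sq]
    rw [this]
    apply norm_integral_le_of_norm_le ((hi1.add hi2).div_const 2)
    filter_upwards with x
    have h1 : ‖Complex.exp (-(Complex.I * ((inner ℝ k x : ℝ) : ℂ)))‖ = 1 := by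
      rw [Complex.norm_exp]; simp
    rw [norm_mul, norm_mul, norm_mul, h1]
    simp only [one_mul, norm_neg, Complex.norm_I, RCLike.norm_conj]
    have := aux_pd_norm u j x
    have := mul_le_mul_of_nonneg_left this (norm_nonneg (u x))
    simp only [Pi.add_apply]
    nlinarith [sq_nonneg (‖u x‖ - ‖fderiv ℝ u x‖)]
  have hH : 0 ≤ H1sq u / 2 := (norm_nonneg _).trans (hF 0)
  have hw0 : 1 ≤ ω k := by
    unfold ω; rw [Real.one_le_sqrt]; nlinarith [sq_nonneg ‖k‖]
  have hB0 : 0 ≤ B0 k := by unfold B0; positivity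
  have hB : B0 k * ‖k‖ ≤ 1 := by
    unfold B0
    have hs : 1 ≤ Real.sqrt (ω k) := by rwa [Real.one_le_sqrt]
    have hq : ‖k‖ ≤ ‖k‖ ^ 2 + ω k := by nlinarith [sq_nonneg (‖k‖ - 1), norm_nonneg k]
    have hpos : 0 < Real.sqrt (ω k) * (‖k‖ ^ 2 + ω k) := by positivity
    rw [one_div, inv_mul_le_iff₀ hpos, mul_one]
    nlinarith [norm_nonneg k]
  have hfu : ‖fu u k‖ = 2 * B0 k * ‖∑ j : Fin 3, ((k j : ℝ) : ℂ) * auxF u j k‖ := by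
    rw [fu, norm_mul, Complex.norm_real, Real.norm_of_nonneg (by positivity)]
    rfl
  have hS : ‖∑ j : Fin 3, ((k j : ℝ) : ℂ) * auxF u j k‖ ≤ 3 * (‖k‖ * (H1sq u / 2)) := by
    refine (norm_sum_le _ _).trans ?_
    calc _ ≤ ∑ j : Fin 3, ‖k‖ * (H1sq u / 2) := by
          apply Finset.sum_le_sum
          intro j _
          rw [norm_mul, Complex.norm_real]
          gcongr
          · exact PiLp.norm_apply_le k j
          · exact hF j
      _ = _ := by simp
  rw [hfu]
  calc _ ≤ 2 * B0 k * (3 * (‖k‖ * (H1sq u / 2))) := by gcongr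
    _ = 6 * (B0 k * ‖k‖) * (H1sq u / 2) := by ring
    _ ≤ 6 * 1 * (H1sq u / 2) := by gcongr
    _ = _ := by ring

end helpers

/-- There is `C > 0` such that for every differentiable `u` with `∇u ∈ L²`, `‖u‖_{L²} = 1`:
`sup_k |f_u(k)| ≤ C‖u‖_{H¹}²` and `∫ ω(k)|f_u(k)|² dk ≤ C‖u‖_{H¹}⁴`. -/
theorem fu_bounds :
    ∃ C > 0, ∀ u : EuclideanSpace ℝ (Fin 3) → ℂ,
      Differentiable ℝ u → MemLp u 2 volume →
      MemLp (fun x => fderiv ℝ u x) 2 volume →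
      (∫ x, ‖u x‖ ^ 2) = 1 →
      (∀ k, ‖fu u k‖ ≤ C * H1norm u ^ 2) ∧
      ∫⁻ k, ENNReal.ofReal (ω k * ‖fu u k‖ ^ 2) ≤
        ENNReal.ofReal (C * H1norm u ^ 4) := by
  obtain ⟨M, hMt, hM⟩ := aux_M
  have hM0 : 0 ≤ M.toReal := ENNReal.toReal_nonneg
  refine ⟨48 * M.toReal + 3, by positivity, ?_⟩
  intro u hu hu2 hg _
  have hp := aux_pd_memLp u hg
  have hH0 : 0 ≤ H1sq u := by unfold H1sq; positivity
  have hN : H1norm u ^ 2 = H1sq u := Real.sq_sqrt hH0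
  have hI1 : 0 ≤ ∫ x, ‖u x‖ ^ 2 := by positivity
  have hI2 : 0 ≤ ∫ x, ‖fderiv ℝ u x‖ ^ 2 := by positivity
  constructor
  · intro k
    rw [hN]
    refine (aux_sup u hu2 hg k).trans ?_
    gcongr
    linarith
  have hN4 : H1norm u ^ 4 = H1sq u ^ 2 := by rw [← hN]; ring
  rw [hN4]
  set H := ENNReal.ofReal (H1sq u) with hH
  have hb1 : ∫⁻ x, ‖u x‖ₑ ^ 2 ≤ H := by
    rw [aux_lint u hu2]
    apply ENNReal.ofReal_le_ofReal
    unfold H1sq; linarith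
  have hb2 : ∀ j, ∫⁻ x, ‖pd u j x‖ₑ ^ 2 ≤ H := by
    intro j
    calc _ ≤ ∫⁻ x, ‖fderiv ℝ u x‖ₑ ^ 2 := by
          gcongr with x
          rw [enorm_le_iff_norm_le]
          exact aux_pd_norm u j x
      _ ≤ _ := by
          rw [aux_lint _ hg]
          apply ENNReal.ofReal_le_ofReal
          unfold H1sq; linarith
  have hA : _ ≤ 4 * H := (aux_A u hu hu2 hp).trans (by
    calc _ ≤ H + ∑ j : Fin 3, H := by
          gcongr with j
          exact hb2 j
      _ = 4 * H := by
          simp only [Finset.sum_const, Finset.card_univ, Fintype.card_fin, nsmul_eq_mul]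
          push_cast; ring)
  have hfin : ∫⁻ k, ENNReal.ofReal (ω k * ‖fu u k‖ ^ 2) ≤ 48 * M * H ^ 2 := by
    have hFm : ∀ j, AEMeasurable (fun k => (auxW k)⁻¹ * ‖auxF u j k‖ₑ ^ 2) volume := by
      intro j
      refine auxW_meas.inv.aemeasurable.mul (AEMeasurable.pow_const ?_ 2)
      apply AEMeasurable.enorm
      apply AEStronglyMeasurable.aemeasurable
      unfold auxF
      have h1 : AEStronglyMeasurable (Function.uncurry fun (k x : EuclideanSpace ℝ (Fin 3)) =>
          Complex.exp (-(Complex.I * ((inner ℝ k x : ℝ) : ℂ))) *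
          (starRingEnd ℂ) (u x) * (-Complex.I * pd u j x)) (volume.prod volume) := by
        unfold Function.uncurry
        refine AEStronglyMeasurable.mul (AEStronglyMeasurable.mul ?_ ?_) ?_
        · exact Continuous.aestronglyMeasurable (by fun_prop)
        · exact Continuous.aestronglyMeasurable
            (Complex.continuous_conj.comp (hu.continuous.comp continuous_snd))
        · exact ((hp j).1.const_mul _).comp_snd
      exact h1.integral_prod_right'
    calc _ ≤ ∫⁻ k, 4 * ∑ j : Fin 3, (auxW k)⁻¹ * ‖auxF u j k‖ₑ ^ 2 :=
          lintegral_mono (aux_pt u)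
      _ = 4 * ∑ j : Fin 3, ∫⁻ k, (auxW k)⁻¹ * ‖auxF u j k‖ₑ ^ 2 := by
          rw [lintegral_const_mul' _ _ (by norm_num), lintegral_finsetSum' _ (fun j _ => hFm j)]
      _ ≤ 4 * ∑ j : Fin 3, (4 * H) * (M * H) := by
          gcongr with j
          refine (aux_int u hu2 j (hp j) _ M hA hM).trans ?_
          gcongr
          exact hb2 j
      _ = _ := by
          simp only [Finset.sum_const, Finset.card_univ, Fintype.card_fin, nsmul_eq_mul]
          push_cast; ring
  refine hfin.trans ?_
  have : 48 * M * H ^ 2 = ENNReal.ofReal (48 * M.toReal * H1sq u ^ 2) := by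
    rw [ENNReal.ofReal_mul (by positivity), ENNReal.ofReal_mul (by positivity),
      ENNReal.ofReal_toReal hMt, ENNReal.ofReal_pow hH0]
    simp [hH]
  rw [this]
  apply ENNReal.ofReal_le_ofReal
  nlinarith [sq_nonneg (H1sq u)]

end
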